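/- arXiv:2305.08427 — 2 statements merged into one kernel-verified Lean document; each statement's English description precedes it below -/
import Mathlib

section
/- Let (q, p) be the global solution of (HS) with initial datum (q(0), p(0)) = (0, √2). Then t ↦ q(t) is increasing on [0, +∞) and q(t) → 1 as t → +∞. -/
open Real Set Filter MeasureTheory
open scoped Topology

/-- The potential `g` from the Hamiltonian `H(x,p) = p²/2 + g(x)`. -/
noncomputable def g (x : ℝ) : ℝ := if |x| ≤ 1 then 1 - (1 - x ^ 2) ^ 4 else 1

/-- The derivative of `g`. -/
noncomputable def g' (x : ℝ) : ℝ := if |x| ≤ 1 then 8 * x * (1 - x ^ 2) ^ 3 else 0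

/-- `(q, p)` is a (global) solution of the Hamiltonian system (HS): `q̇ = p`, `ṗ = -g'(q)`. -/
def IsHSSol (q p : ℝ → ℝ) : Prop :=
  (∀ t : ℝ, HasDerivAt q (p t) t) ∧ (∀ t : ℝ, HasDerivAt p (-(g' (q t))) t)

/-- `F` is the flow of (HS): `F t q₀ p₀ = (q t, p t)` for the solution with data `(q₀, p₀)`. -/
def IsHSFlow (F : ℝ → ℝ → ℝ → ℝ × ℝ) : Prop :=
  ∀ q₀ p₀ : ℝ,
    IsHSSol (fun t => (F t q₀ p₀).1) (fun t => (F t q₀ p₀).2) ∧ F 0 q₀ p₀ = (q₀, p₀)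

/-- The set `([0,∞) × {2}) ∪ ({0} × (0,2])`, codomain of the map `Δ`. -/
def Dset : Set (ℝ × ℝ) := (Ici (0:ℝ) ×ˢ ({2} : Set ℝ)) ∪ ({(0:ℝ)} ×ˢ Ioc (0:ℝ) 2)

/-- `T` is the smallest positive period of `q`. -/
def IsSmallestPeriod (q : ℝ → ℝ) (T : ℝ) : Prop :=
  0 < T ∧ Function.Periodic q T ∧ ∀ T' : ℝ, 0 < T' → Function.Periodic q T' → T ≤ T'

/-- `T` is the period map `𝒯`, assigning to `p₀ ∈ (0, √2)` the smallest positive period of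
the `q`-component of the solution of (HS) with initial datum `(0, p₀)`. -/
def IsPeriodMap (F : ℝ → ℝ → ℝ → ℝ × ℝ) (T : ℝ → ℝ) : Prop :=
  ∀ p₀ ∈ Ioo (0:ℝ) (Real.sqrt 2), IsSmallestPeriod (fun t => (F t 0 p₀).1) (T p₀)

/-- `Δ` associates to `(t,x)` the datum in `Dset` whose orbit stays positive on `(0,t)`
and reaches `x` at time `t`. -/
def IsDeltaMap (F : ℝ → ℝ → ℝ → ℝ × ℝ) (Δ : ℝ → ℝ → ℝ × ℝ) : Prop :=
  ∀ t x : ℝ, 0 < t → 0 < x →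
    Δ t x ∈ Dset ∧ (F t (Δ t x).1 (Δ t x).2).1 = x ∧
      ∀ s ∈ Ioo (0:ℝ) t, 0 < (F s (Δ t x).1 (Δ t x).2).1

/-- The solution `u` of the conservation law built from the flow `F` and the map `Δ`
(extended by `0` at `x = 0`). -/
noncomputable def usol (F : ℝ → ℝ → ℝ → ℝ × ℝ) (Δ : ℝ → ℝ → ℝ × ℝ) (t x : ℝ) : ℝ :=
  if 0 < x then (F t (Δ t x).1 (Δ t x).2).2
  else if x < 0 then -(F t (Δ t (-x)).1 (Δ t (-x)).2).2
  else 0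

theorem hasDerivAt_max_sq (y : ℝ) :
    HasDerivAt (fun y : ℝ => (max y 0) ^ 2) (2 * max y 0) y := by
  rcases lt_trichotomy y 0 with h | h | h
  · have h1 : HasDerivAt (fun _ : ℝ => (0:ℝ)) (2 * max y 0) y := by
      rw [max_eq_right h.le, mul_zero]; exact hasDerivAt_const y 0
    refine h1.congr_of_eventuallyEq ?_
    filter_upwards [Iio_mem_nhds h] with z hz
    rw [max_eq_right (le_of_lt hz)]; norm_num
  · subst h
    rw [hasDerivAt_iff_isLittleO]
    have h2 : (fun x : ℝ => x ^ 2) =o[𝓝 0] fun x : ℝ => x - 0 := by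
      simpa using (Asymptotics.isLittleO_pow_id (𝕜 := ℝ) (n := 2) (by norm_num))
    refine Asymptotics.IsBigO.trans_isLittleO ?_ h2
    refine Asymptotics.IsBigO.of_bound 1 (Eventually.of_forall fun x => ?_)
    rcases le_total x 0 with hx | hx
    · simp [max_eq_right hx]; positivity
    · simp [max_eq_left hx]
  · have h1 : HasDerivAt (fun z : ℝ => z ^ 2) (2 * max y 0) y := by
      rw [max_eq_left h.le]; simpa using hasDerivAt_pow 2 y
    refine h1.congr_of_eventuallyEq ?_
    filter_upwards [Ioi_mem_nhds h] with z hz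
    rw [max_eq_left (le_of_lt hz)]

theorem linear_ode (a y : ℝ → ℝ) (ha : Continuous a)
    (hy : ∀ t, HasDerivAt y (a t * y t) t) :
    ∃ A : ℝ → ℝ, ∀ t, y t = y 0 * Real.exp (A t) := by
  refine ⟨fun t => ∫ s in (0:ℝ)..t, a s, fun t => ?_⟩
  have hA : ∀ t, HasDerivAt (fun t => ∫ s in (0:ℝ)..t, a s) (a t) t := fun t =>
    ha.integral_hasStrictDerivAt 0 t |>.hasDerivAt
  have hc : ∀ t, HasDerivAt (fun t => y t * Real.exp (-∫ s in (0:ℝ)..t, a s)) 0 t := by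
    intro t
    exact ((hy t).mul ((hA t).neg.exp)).congr_deriv (by ring)
  have h := is_const_of_deriv_eq_zero (fun t => (hc t).differentiableAt)
    (fun t => (hc t).deriv) t 0
  simp only [intervalIntegral.integral_same, neg_zero, Real.exp_zero, mul_one] at h
  rw [← h, mul_assoc, ← Real.exp_add]
  simp

theorem g'_eq (x : ℝ) : g' x = 8 * x * (max (1 - x ^ 2) 0) ^ 3 := by
  unfold g'
  split_ifs with h
  · rw [max_eq_left]
    have := (sq_le_one_iff_abs_le_one x).2 h
    linarith
  · rw [max_eq_right]
    · norm_num
    · have := mt (sq_le_one_iff_abs_le_one x).1 h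
      linarith

/-- Lemma ce3 (ii): the solution of (HS) with datum `(0, √2)` has `q` increasing on
`[0, ∞)` and `q(t) → 1` as `t → +∞`. -/
theorem stmt_4 (q p : ℝ → ℝ)
    (hsol : IsHSSol q p) (hq0 : q 0 = 0) (hp0 : p 0 = Real.sqrt 2) :
    StrictMonoOn q (Ici 0) ∧ Tendsto q atTop (𝓝 1) := by
  obtain ⟨hq, hp⟩ := hsol
  have hs : Real.sqrt 2 ^ 2 = 2 := Real.sq_sqrt (by norm_num)
  have hs0 : 0 < Real.sqrt 2 := Real.sqrt_pos.2 (by norm_num)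
  have hqc : Continuous q := continuous_iff_continuousAt.2 fun t => (hq t).continuousAt
  have hn : ∀ t, HasDerivAt (fun t => 1 - q t ^ 2) (-(2 * q t * p t)) t := by
    intro t
    simpa using ((hq t).pow 2).const_sub 1
  -- step 1: `p = √2 m(q)²`
  have hpe : ∀ t, p t = Real.sqrt 2 * (max (1 - q t ^ 2) 0) ^ 2 := by
    obtain ⟨A, hA⟩ := linear_ode (fun t => 4 * Real.sqrt 2 * q t * max (1 - q t ^ 2) 0)
      (fun t => p t - Real.sqrt 2 * (max (1 - q t ^ 2) 0) ^ 2) (by fun_prop) (by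
        intro t
        have h1 := (hasDerivAt_max_sq (1 - q t ^ 2)).comp t (hn t)
        have h2 := (hp t).sub (h1.const_mul (Real.sqrt 2))
        refine h2.congr_deriv ?_
        rw [g'_eq]
        linear_combination (4 * q t * (max (1 - q t ^ 2) 0) ^ 3) * hs)
    intro t
    have := hA t
    simp only [hq0, hp0] at this
    norm_num at this
    linarith
  -- step 2: `1 - q² > 0`
  have hpos : ∀ t, 0 < 1 - q t ^ 2 := by
    obtain ⟨A, hA⟩ := linear_ode (fun t => -(2 * Real.sqrt 2 * q t * max (1 - q t ^ 2) 0))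
      (fun t => 1 - q t ^ 2) (by fun_prop) (by
        intro t
        refine (hn t).congr_deriv ?_
        rw [hpe t]
        rcases le_total (1 - q t ^ 2) 0 with h | h
        · rw [max_eq_right h]; ring
        · rw [max_eq_left h]; ring)
    intro t
    have := hA t
    simp only [hq0] at this
    rw [this]
    have := Real.exp_pos (A t)
    norm_num
    exact this
  have hpe' : ∀ t, p t = Real.sqrt 2 * (1 - q t ^ 2) ^ 2 := fun t => by
    rw [hpe t, max_eq_left (hpos t).le]
  have hp_pos : ∀ t, 0 < p t := fun t => by
    rw [hpe' t]; have := hpos t; positivity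
  have hmono : StrictMono q := strictMono_of_deriv_pos fun t => by
    rw [(hq t).deriv]; exact hp_pos t
  refine ⟨hmono.strictMonoOn _, ?_⟩
  have hlt : ∀ t, q t < 1 := fun t => by nlinarith [hpos t]
  refine tendsto_order.2 ⟨fun c hc => ?_, fun c hc => Eventually.of_forall fun t => (hlt t).trans hc⟩
  -- some time exceeds `c`
  by_contra hcon
  have hle : ∀ t, q t ≤ c := by
    intro t
    by_contra ht
    push Not at ht
    exact hcon (by filter_upwards [eventually_ge_atTop t] with s hs
                   exact ht.trans_le (hmono.monotone hs))
  have hc0 : 0 ≤ c := hq0 ▸ hle 0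
  set k := Real.sqrt 2 * (1 - c ^ 2) ^ 2 with hk
  have hkpos : 0 < k := by
    have : 0 < 1 - c ^ 2 := by nlinarith
    positivity
  have hgrow : ∀ t, 0 ≤ t → k * t ≤ q t := by
    intro t ht
    have hm : MonotoneOn (fun t => q t - k * t) (Ici 0) := by
      have hd : ∀ t, HasDerivAt (fun t => q t - k * t) (p t - k) t := fun t => by
        exact ((hq t).sub ((hasDerivAt_id t).const_mul k)).congr_deriv (by ring)
      refine monotoneOn_of_deriv_nonneg (convex_Ici 0)
        (fun t _ => (hd t).continuousAt.continuousWithinAt)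
        (fun t _ => (hd t).differentiableAt.differentiableWithinAt) ?_
      intro t ht
      rw [interior_Ici] at ht
      rw [(hd t).deriv, hpe' t, hk]
      have h0 : 0 ≤ q t := hq0 ▸ hmono.monotone (le_of_lt ht)
      have h1 : q t ^ 2 ≤ c ^ 2 := by gcongr; exact hle t
      have h2 : 0 ≤ 1 - c ^ 2 := by nlinarith
      have h3 : (1 - c ^ 2) ^ 2 ≤ (1 - q t ^ 2) ^ 2 := by gcongr
      have := mul_le_mul_of_nonneg_left h3 hs0.le
      linarith
    have := hm (mem_Ici.2 le_rfl) (mem_Ici.2 ht) ht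
    simp only [hq0] at this
    linarith
  have h1 := hgrow (1 / k) (by positivity)
  rw [mul_one_div_cancel hkpos.ne'] at h1
  linarith [hlt (1 / k)]
end

section
/- Fix p₀ ∈ (0, √2) and let (q, p) be the global solution of (HS) with initial datum (q(0), p(0)) = (0, p₀). Then q is periodic and admits a smallest positive period 𝒯(p₀); moreover q(t) > 0 for all t ∈ (0, 𝒯(p₀)/2) and q(t) < 0 for all t ∈ (𝒯(p₀)/2, 𝒯(p₀)). -/
open Real Set Filter MeasureTheory
open scoped Topology

theorem hasDerivAt_maxpow (y : ℝ) :
    HasDerivAt (fun y : ℝ => (max 0 y) ^ 4) (4 * (max 0 y) ^ 3) y := by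
  have hR : ∀ z : ℝ, 0 ≤ z → HasDerivWithinAt (fun y : ℝ => (max 0 y) ^ 4)
      (4 * (max 0 z) ^ 3) (Ici 0) z := by
    intro z hz
    have h := ((hasDerivAt_pow 4 z).hasDerivWithinAt (s := Ici 0))
    rw [max_eq_right hz]
    refine (h.congr_deriv (by norm_num)).congr ?_ ?_
    · intro x hx
      simp only [max_eq_right (mem_Ici.1 hx)]
    · simp only [max_eq_right hz]
  have hL : ∀ z : ℝ, z ≤ 0 → HasDerivWithinAt (fun y : ℝ => (max 0 y) ^ 4)
      (4 * (max 0 z) ^ 3) (Iic 0) z := by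
    intro z hz
    have h := ((hasDerivAt_const z (0:ℝ)).hasDerivWithinAt (s := Iic 0))
    rw [max_eq_left hz]
    refine (h.congr_deriv (by norm_num)).congr ?_ ?_
    · intro x hx
      simp only [max_eq_left (mem_Iic.1 hx)]; norm_num
    · simp only [max_eq_left hz]; norm_num
  rcases lt_trichotomy y 0 with h | h | h
  · exact (hL y h.le).hasDerivAt (Iic_mem_nhds h)
  · have := (hL y h.le).union (hR y h.ge)
    rwa [Iic_union_Ici, hasDerivWithinAt_univ] at this
  · exact (hR y h.le).hasDerivAt (Ici_mem_nhds h)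

theorem g_eq_max (x : ℝ) : g x = 1 - (max 0 (1 - x ^ 2)) ^ 4 := by
  unfold g
  split_ifs with h
  · have : x ^ 2 ≤ 1 := (sq_le_one_iff_abs_le_one x).2 h
    rw [max_eq_right (by linarith)]
  · have : ¬ x ^ 2 ≤ 1 := fun h' => h ((sq_le_one_iff_abs_le_one x).1 h')
    rw [max_eq_left (by linarith)]; norm_num

theorem g'_eq_max (x : ℝ) : g' x = 8 * x * (max 0 (1 - x ^ 2)) ^ 3 := by
  unfold g'
  split_ifs with h
  · have : x ^ 2 ≤ 1 := (sq_le_one_iff_abs_le_one x).2 h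
    rw [max_eq_right (by linarith)]
  · have : ¬ x ^ 2 ≤ 1 := fun h' => h ((sq_le_one_iff_abs_le_one x).1 h')
    rw [max_eq_left (by linarith)]; norm_num

theorem hasDerivAt_g (x : ℝ) : HasDerivAt g (g' x) x := by
  have h1 : HasDerivAt (fun x : ℝ => 1 - x ^ 2) (-(2 * x)) x := by
    simpa using (hasDerivAt_pow 2 x).const_sub 1
  have h2 := ((hasDerivAt_maxpow (1 - x ^ 2)).comp x h1).const_sub 1
  have : g = fun x => 1 - ((fun y : ℝ => (max 0 y) ^ 4) ∘ fun x : ℝ => 1 - x ^ 2) x := by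
    funext y; exact g_eq_max y
  rw [this]
  refine h2.congr_deriv ?_
  rw [g'_eq_max]; ring

theorem energy {q p : ℝ → ℝ} (h : IsHSSol q p) (t : ℝ) :
    p t ^ 2 / 2 + g (q t) = p 0 ^ 2 / 2 + g (q 0) := by
  have hd : ∀ t, HasDerivAt (fun t => p t ^ 2 / 2 + g (q t)) 0 t := by
    intro t
    have h1 := (((h.2 t).pow 2).div_const 2).add ((hasDerivAt_g (q t)).comp t (h.1 t))
    refine h1.congr_deriv ?_
    norm_num; ring
  exact is_const_of_deriv_eq_zero (fun t => (hd t).differentiableAt) (fun t => (hd t).deriv) t 0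

theorem g'_lip : ∃ K : NNReal, LipschitzOnWith K g' (Icc (-1) 1) := by
  have hc : ContDiffOn ℝ 1 (fun x : ℝ => 8 * x * (1 - x ^ 2) ^ 3) (Icc (-1) 1) := by
    fun_prop
  obtain ⟨K, hK⟩ := hc.exists_lipschitzOnWith one_ne_zero (convex_Icc _ _) isCompact_Icc
  refine ⟨K, fun x hx y hy => ?_⟩
  have e : ∀ z ∈ Icc (-1:ℝ) 1, g' z = 8 * z * (1 - z ^ 2) ^ 3 := by
    intro z hz
    unfold g'
    rw [if_pos (abs_le.2 hz)]
  rw [e x hx, e y hy]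
  exact hK hx hy

theorem HS_unique {q p a b : ℝ → ℝ} (h : IsHSSol q p) (h' : IsHSSol a b)
    (hq : ∀ t, |q t| ≤ 1) (ha : ∀ t, |a t| ≤ 1) (e1 : q 0 = a 0) (e2 : p 0 = b 0) : q = a := by
  obtain ⟨K, hK⟩ := g'_lip
  have hL : LipschitzOnWith (max 1 K) (fun z : ℝ × ℝ => (z.2, -(g' z.1)))
      ((Icc (-1) 1) ×ˢ univ) := by
    refine LipschitzOnWith.prodMk LipschitzWith.prod_snd.lipschitzOnWith ?_
    intro x hx y hy
    rw [edist_neg_neg]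
    exact (hK hx.1 hy.1).trans (by gcongr; exact le_max_left _ _)
  have := ODE_solution_unique_univ (v := fun (_ : ℝ) (z : ℝ × ℝ) => (z.2, -(g' z.1)))
    (s := fun _ => (Icc (-1) 1) ×ˢ univ) (K := max 1 K) (t₀ := 0)
    (f := fun t => (q t, p t)) (g := fun t => (a t, b t)) (fun _ => hL)
    (fun t => ⟨(h.1 t).prodMk (h.2 t), abs_le.1 (hq t), trivial⟩)
    (fun t => ⟨(h'.1 t).prodMk (h'.2 t), abs_le.1 (ha t), trivial⟩)
    (by simp [e1, e2])
  funext t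
  exact congrArg Prod.fst (congrFun this t)

theorem g'_odd (x : ℝ) : g' (-x) = - g' x := by
  rw [g'_eq_max, g'_eq_max]; ring_nf

theorem exists_nonpos {q p : ℝ → ℝ} (h : IsHSSol q p) (c : ℝ) (hc : 0 < c) (hq0 : q 0 = 0)
    (hw : ∀ t, 0 < q t → c * q t ≤ g' (q t)) : ∃ t, 0 < t ∧ q t ≤ 0 := by
  by_contra! hpos
  set k := √c with hk
  have hk0 : 0 < k := Real.sqrt_pos.2 hc
  have hkk : k * k = c := Real.mul_self_sqrt hc.le
  have hd : ∀ t, HasDerivAt (fun t => p t * Real.sin (k * t) - q t * (k * Real.cos (k * t)))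
      ((c * q t - g' (q t)) * Real.sin (k * t)) t := by
    intro t
    have hl : HasDerivAt (fun t : ℝ => k * t) k t := by
      simpa using (hasDerivAt_id t).const_mul k
    have h1 := ((h.2 t).mul hl.sin).sub ((h.1 t).mul (hl.cos.const_mul k))
    refine h1.congr_deriv ?_
    rw [← hkk]; ring
  have hanti : AntitoneOn (fun t => p t * Real.sin (k * t) - q t * (k * Real.cos (k * t)))
      (Icc 0 (π / k)) := by
    apply antitoneOn_of_deriv_nonpos (convex_Icc _ _)
    · exact fun t _ => (hd t).continuousAt.continuousWithinAt
    · exact fun t _ => (hd t).differentiableAt.differentiableWithinAt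
    · intro t ht
      rw [interior_Icc] at ht
      rw [(hd t).deriv]
      apply mul_nonpos_of_nonpos_of_nonneg
      · linarith [hw t (hpos t ht.1)]
      · apply Real.sin_nonneg_of_nonneg_of_le_pi (by have := ht.1; positivity)
        have := (lt_div_iff₀ hk0).1 ht.2
        linarith
  have hp : 0 < π / k := by positivity
  have := hanti (left_mem_Icc.2 hp.le) (right_mem_Icc.2 hp.le) hp.le
  have e : k * (π / k) = π := by field_simp
  simp only [e, hq0, Real.sin_pi, Real.cos_pi, mul_zero, Real.sin_zero] at this
  nlinarith [mul_pos (hpos _ hp) hk0]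

/-- Lemma ce3 (iii), first part: for `p₀ ∈ (0, √2)`, the `q`-component of the solution of
(HS) with datum `(0, p₀)` is periodic with a smallest positive period `𝒯(p₀)`; moreover
`q > 0` on `(0, 𝒯(p₀)/2)` and `q < 0` on `(𝒯(p₀)/2, 𝒯(p₀))`. -/
theorem stmt_5 (p₀ : ℝ) (hp₀ : p₀ ∈ Ioo (0:ℝ) (Real.sqrt 2)) (q p : ℝ → ℝ)
    (hsol : IsHSSol q p) (hq0 : q 0 = 0) (hp0 : p 0 = p₀) :
    ∃ T : ℝ, IsSmallestPeriod q T ∧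
      (∀ t ∈ Ioo (0:ℝ) (T / 2), 0 < q t) ∧
      (∀ t ∈ Ioo (T / 2) T, q t < 0) := by
  obtain ⟨hp1, hp2⟩ := hp₀
  have hsq : p₀ ^ 2 < 2 := by
    have := Real.sq_sqrt (show (0:ℝ) ≤ 2 by norm_num)
    nlinarith
  have hg0 : g 0 = 0 := by unfold g; norm_num
  have hE : ∀ t, p t ^ 2 / 2 + g (q t) = p₀ ^ 2 / 2 := by
    intro t
    rw [energy hsol t, hq0, hp0, hg0, add_zero]
  have hlt : ∀ t, |q t| ≤ 1 := by
    intro t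
    by_contra hcon
    have h1 : g (q t) = 1 := by unfold g; rw [if_neg hcon]
    nlinarith [hE t, sq_nonneg (p t)]
  set c := 1 - p₀ ^ 2 / 2 with hc
  have hc0 : 0 < c := by linarith
  have hw : ∀ t, 0 < q t → (8 * c) * q t ≤ g' (q t) := by
    intro t ht
    have h1 := hE t
    unfold g' 
    unfold g at h1
    rw [if_pos (hlt t)] at h1 ⊢
    have hs : q t ^ 2 ≤ 1 := (sq_le_one_iff_abs_le_one _).2 (hlt t)
    have h3 : (1 - q t ^ 2) ^ 4 ≤ (1 - q t ^ 2) ^ 3 :=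
      pow_le_pow_of_le_one (by linarith) (by nlinarith [sq_nonneg (q t)]) (by norm_num)
    have h4 : c ≤ (1 - q t ^ 2) ^ 3 := by nlinarith [sq_nonneg (p t)]
    nlinarith
  have hcont : Continuous q := continuous_iff_continuousAt.2 fun t => (hsol.1 t).continuousAt
  obtain ⟨t₁, ht₁, hqt₁⟩ := exists_nonpos hsol (8 * c) (by positivity) hq0 hw
  have hsgn : ∀ t, q t = 0 → 0 < p t → ∃ ε > 0, ∀ s, |s - t| < ε →
      SignType.sign (q s) = SignType.sign (s - t) := by
    intro t h0 hp
    have := eventually_nhdsWithin_sign_eq_of_deriv_pos (f := q) (x₀ := t)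
      (by rw [(hsol.1 t).deriv]; exact hp) h0
    obtain ⟨ε, hε, H⟩ := Metric.eventually_nhds_iff.1 this
    exact ⟨ε, hε, fun s hs => H (by rwa [Real.dist_eq])⟩
  obtain ⟨ε, hε, hpos0⟩ : ∃ ε > 0, ∀ s, 0 < s → s < ε → 0 < q s := by
    obtain ⟨ε, hε, H⟩ := hsgn 0 hq0 (by rw [hp0]; exact hp1)
    refine ⟨ε, hε, fun s h1 h2 => ?_⟩
    have := H s (by rw [sub_zero, abs_of_pos h1]; exact h2)
    rw [sub_zero, sign_pos h1] at this
    exact sign_eq_one_iff.1 this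
  set Z : Set ℝ := {t | ε ≤ t ∧ q t ≤ 0} with hZ
  have hZc : IsClosed Z := (isClosed_le continuous_const continuous_id).inter
    (isClosed_le hcont continuous_const)
  have hZn : Z.Nonempty := ⟨t₁, not_lt.1 fun h => absurd (hpos0 t₁ ht₁ h) (not_lt.2 hqt₁), hqt₁⟩
  have hZb : BddBelow Z := ⟨ε, fun t ht => ht.1⟩
  obtain ⟨τ, hτZ, hτmin⟩ : ∃ τ ∈ Z, ∀ t ∈ Z, τ ≤ t :=
    ⟨sInf Z, hZc.csInf_mem hZn hZb, fun t ht => csInf_le hZb ht⟩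
  have hτ : 0 < τ := lt_of_lt_of_le hε hτZ.1
  have hpos : ∀ t, 0 < t → t < τ → 0 < q t := by
    intro t h1 h2
    rcases lt_or_ge t ε with h | h
    · exact hpos0 t h1 h
    · by_contra hn
      exact absurd (hτmin t ⟨h, not_lt.1 hn⟩) (not_le.2 h2)
  have hqτ : q τ = 0 := by
    refine le_antisymm hτZ.2 ?_
    have : τ ∈ closure (Ioo 0 τ) := by
      rw [closure_Ioo hτ.ne]; exact right_mem_Icc.2 hτ.le
    exact closure_minimal (fun t ht => (hpos t ht.1 ht.2).le)
      (isClosed_le continuous_const hcont) this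
  have hpτ : p τ = -p₀ := by
    have h1 := hE τ
    rw [hqτ, hg0] at h1
    have h2 : (p τ - p₀) * (p τ + p₀) = 0 := by nlinarith
    rcases mul_eq_zero.1 h2 with h | h
    · exfalso
      obtain ⟨δ, hδ, H⟩ := hsgn τ hqτ (by linarith)
      have hm : 0 < min δ τ := lt_min hδ hτ
      have hm1 := min_le_left δ τ
      have hm2 := min_le_right δ τ
      have h5 := H (τ - min δ τ / 2) (by rw [abs_lt]; constructor <;> linarith)
      rw [sign_pos (hpos _ (by linarith) (by linarith)), sign_neg (by linarith)] at h5
      exact absurd h5 (by decide)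
    · linarith
  have hanti : ∀ t, q (t + τ) = -q t := by
    have hs2 : IsHSSol (fun t => -q (t + τ)) (fun t => -p (t + τ)) := by
      constructor
      · intro t
        exact ((hsol.1 (t + τ)).comp_add_const t τ).neg
      · intro t
        rw [g'_odd]
        exact ((hsol.2 (t + τ)).comp_add_const t τ).neg
    have := HS_unique hsol hs2 hlt (fun t => by rw [abs_neg]; exact hlt _)
      (by simp [hq0, hqτ]) (by simp [hp0, hpτ])
    intro t
    have h := congrFun this t
    linarith
  have hneg : ∀ t, τ < t → t < 2 * τ → q t < 0 := by
    intro t h1 h2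
    have := hanti (t - τ)
    rw [sub_add_cancel] at this
    linarith [hpos (t - τ) (by linarith) (by linarith)]
  refine ⟨2 * τ, ⟨by positivity, ?_, ?_⟩, ?_, ?_⟩
  · intro t
    rw [two_mul, ← add_assoc, hanti, hanti, neg_neg]
  · intro T' hT' hper
    by_contra hn
    have h0 : q T' = 0 := by
      have := hper 0
      rwa [zero_add, hq0] at this
    rcases lt_trichotomy T' τ with h | h | h
    · linarith [hpos T' hT' h]
    · have h1 := hper (τ / 2)
      rw [h, hanti] at h1
      linarith [hpos (τ / 2) (by linarith) (by linarith)]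
    · linarith [hneg T' h (not_le.1 hn)]
  · intro t ht
    exact hpos t ht.1 (by linarith [ht.2])
  · intro t ht
    exact hneg t (by linarith [ht.1]) ht.2
end
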